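/- Let f ∈ K⦃x⦄ and suppose that for some j ≥ 0 the derivative f^{(j)} lies in O_K⦃x⦄ and is (Weierstrass) regular of degree m − j > 0. If the characteristic of K is zero, then there exists a constant c_{m,K}, depending only on m, q_K, and the ramification degree ord(p_K), such that for all nonzero y ∈ K one has |∫_{O_K} ψ(y·f(t)) |dt|| ≤ c_{m,K} · |y|^{-1/m}. -/

import Mathlib

open MeasureTheory Filter
open scoped NNReal ENNReal Classical

namespace VdC

variable {K : Type*} [NontriviallyNormedField K]

/-! ### One-variable convergent power series over a non-archimedean local field -/

/-- Evaluation of a one-variable power series (given by its coefficients) at a point. -/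
noncomputable def pseval (a : ℕ → K) (x : K) : K := ∑' i, a i * x ^ i

/-- Membership in `K⦃x⦄`: the coefficients tend to `0`, i.e. convergence on `O_K`. -/
def IsConvergent (a : ℕ → K) : Prop := Tendsto (fun i => ‖a i‖) atTop (nhds 0)

/-- Gauss norm of a power series. -/
noncomputable def gaussNorm (a : ℕ → K) : ℝ := ⨆ i, ‖a i‖

/-- Coefficients of `f - f(0)`. -/
def tail (a : ℕ → K) : ℕ → K := fun i => if i = 0 then 0 else a i

/-- SP power series: `a 1 ≠ 0` and `a j ∈ a 1 • M_K` for all `j > 1`;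
`‖a 1‖` is then the SP-norm `|f|_SP`. -/
def IsSP (a : ℕ → K) : Prop := a 1 ≠ 0 ∧ ∀ j, 1 < j → ‖a j‖ < ‖a 1‖

/-- Coefficients of `f_{b,c}(t) = (1/c) ⬝ f (b + c t)`. -/
noncomputable def shiftCoeff (a : ℕ → K) (b c : K) : ℕ → K :=
  fun j => c⁻¹ * c ^ j * ∑' m : ℕ, ((m + j).choose j : K) * a (m + j) * b ^ m

/-- `SPAt q a r` says: for all nonzero `c ∈ M_K ^ r` and all `b ∈ O_K`, the power series
`f_{b,c}` is SP.  (Here `c ∈ M_K ^ r` iff `‖c‖ ≤ q⁻¹ ^ r`.)  The SP-number of `f` is the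
least `r` with this property, i.e. `IsLeast {r | SPAt q a r} r`. -/
def SPAt (q : ℕ) (a : ℕ → K) (r : ℕ) : Prop :=
  ∀ b c : K, ‖b‖ ≤ 1 → c ≠ 0 → ‖c‖ ≤ (q : ℝ)⁻¹ ^ r → IsSP (shiftCoeff a b c)

/-- Coefficients of the derivative of a power series; `dcoeff^[k] a` gives `f^{(k)}`. -/
def dcoeff (a : ℕ → K) : ℕ → K := fun j => ((j + 1 : ℕ) : K) * a (j + 1)

/-- `K` is a non-archimedean local field whose residue field has `q` elements, the norm
being normalized so that a uniformizer `π_K` has norm `q⁻¹`. -/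
structure IsLocalField (K : Type*) [NontriviallyNormedField K] (q : ℕ) : Prop where
  nonarch : IsNonarchimedean (norm : K → ℝ)
  one_lt : 1 < q
  complete : CompleteSpace K
  exists_unif : ∃ π : K, ‖π‖ = (q : ℝ)⁻¹
  discrete : ∀ x : K, x ≠ 0 → ∃ m : ℤ, ‖x‖ = (q : ℝ) ^ m
  residue : ∃ T : Finset K, T.card = q ∧ (∀ t ∈ T, ‖t‖ ≤ 1) ∧
      ∀ x : K, ‖x‖ ≤ 1 → ∃! t, t ∈ T ∧ ‖x - t‖ < 1

/-- `ψ` is an additive character on `K`, trivial on `M_K` and nontrivial on `O_K`. -/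
structure IsAddChar (ψ : K → ℂ) : Prop where
  cont : Continuous ψ
  map_add : ∀ x y, ψ (x + y) = ψ x * ψ y
  norm_eq : ∀ x, ‖ψ x‖ = 1
  triv : ∀ x : K, ‖x‖ < 1 → ψ x = 1
  nontriv : ∃ x : K, ‖x‖ ≤ 1 ∧ ψ x ≠ 1

/-- The characteristic of `K` is zero or larger than `k`. -/
def CharCond (K : Type*) [NontriviallyNormedField K] (k : ℕ) : Prop :=
  ∀ m : ℕ, m ≤ k → (m : K) = 0 → m = 0

/-- `p` is the residue characteristic of `K` (so `q = p ^ f` is the residue cardinality)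
and `e = ord (p_K)` is the ramification degree of `K`, i.e. `‖p‖ = q ^ (-e)`. -/
def IsResidueData (K : Type*) [NontriviallyNormedField K] (q p e : ℕ) : Prop :=
  p.Prime ∧ (∃ f : ℕ, 0 < f ∧ q = p ^ f) ∧ 0 < e ∧ ‖(p : K)‖ = (q : ℝ)⁻¹ ^ e

/-- `f` is (Weierstrass) regular of degree `d`: it lies in `O_K⦃x⦄` and is congruent to
a monic polynomial of degree `d` modulo `π_K ⬝ O_K⦃x⦄`. -/
def IsRegularOfDeg (a : ℕ → K) (d : ℕ) : Prop :=
  (∀ i, ‖a i‖ ≤ 1) ∧ ‖a d - 1‖ < 1 ∧ ∀ i, d < i → ‖a i‖ < 1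

/-! ### Several variables -/

/-- Evaluation of a power series in `n` variables at a point. -/
noncomputable def mpseval {n : ℕ} (a : (Fin n → ℕ) → K) (x : Fin n → K) : K :=
  ∑' i : Fin n → ℕ, a i * ∏ j, x j ^ i j

/-- Membership in `K⦃x_1,…,x_n⦄`: `‖a i‖ → 0` as `|i| → ∞`. -/
def MIsConvergent {n : ℕ} (a : (Fin n → ℕ) → K) : Prop :=
  Tendsto (fun i => ‖a i‖) cofinite (nhds 0)

/-- Gauss norm of a multivariate power series. -/
noncomputable def mgauss {n : ℕ} (a : (Fin n → ℕ) → K) : ℝ := ⨆ i, ‖a i‖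

/-- Coefficients of `f - f(0)`. -/
def mtail {n : ℕ} (a : (Fin n → ℕ) → K) : (Fin n → ℕ) → K :=
  fun i => if i = 0 then 0 else a i

/-- Coefficients of the partial derivative `∂^α f` of a multivariate power series `f`. -/
noncomputable def mpderiv {n : ℕ} (a : (Fin n → ℕ) → K) (α : Fin n → ℕ) :
    (Fin n → ℕ) → K :=
  fun i => ((∏ j, (i j + α j).descFactorial (α j) : ℕ) : K) * a (fun j => i j + α j)

/-- The unit polydisc `O_K ^ n`. -/
def polydisc (K : Type*) [NontriviallyNormedField K] (n : ℕ) : Set (Fin n → K) :=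
  {x | ∀ i, ‖x i‖ ≤ 1}

/-! ### `K`-analytic manifolds with isometric charts, type conditions, induced measures -/

/-- An isometric analytic chart of the `d`-dimensional manifold `M ⊆ K^n` centered at
`x0 ∈ M`: `ι` selects the `d` coordinates of the coordinate projection `p : x ↦ x ∘ ι`,
and the inverse of `p` is given by the `n` convergent power series `F i`, parametrizing
`M ∩ {x : ‖x - x0‖ ≤ ‖c‖}` isometrically by the polydisc `x0 + (c O_K)^d`. -/
def IsChartAt {n : ℕ} (d : ℕ) (M : Set (Fin n → K)) (x0 : Fin n → K)
    (ι : Fin d → Fin n) (c : K) (F : Fin n → (Fin d → ℕ) → K) : Prop :=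
  Function.Injective ι ∧ c ≠ 0 ∧ (∀ i, MIsConvergent (F i)) ∧
  (∀ i, mpseval (F i) 0 = x0 i) ∧
  (∀ z : Fin d → K, z ∈ polydisc K d → ∀ j, mpseval (F (ι j)) z = x0 (ι j) + c * z j) ∧
  (∀ z z' : Fin d → K, z ∈ polydisc K d → z' ∈ polydisc K d →
      ∀ i, ‖mpseval (F i) z - mpseval (F i) z'‖ ≤ ‖c‖ * (⨆ j, ‖z j - z' j‖)) ∧
  ((fun z : Fin d → K => fun i => mpseval (F i) z) '' polydisc K d
      = M ∩ {x | ∀ i, ‖x i - x0 i‖ ≤ ‖c‖})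

/-- `M ⊆ K^n` is a `d`-dimensional `K`-analytic manifold (with isometric charts). -/
def IsManifold {n : ℕ} (d : ℕ) (M : Set (Fin n → K)) : Prop :=
  ∀ x0 ∈ M, ∃ ι c F, IsChartAt d M x0 ι c F

/-- `M` is of type at most `k` at the point `x0`: for some analytic chart `f = (F i)_i`
centered at `x0` and each nonzero `v ∈ K^n` there is a multi-index `α` with
`0 < |α| ≤ k` and `v ⬝ (∂^α f)(x0) ≠ 0`. -/
def TypeAtMost {n : ℕ} (d : ℕ) (M : Set (Fin n → K)) (x0 : Fin n → K) (k : ℕ) : Prop :=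
  ∃ ι c F, IsChartAt d M x0 ι c F ∧
    ∀ v : Fin n → K, v ≠ 0 → ∃ α : Fin d → ℕ, 0 < (∑ j, α j) ∧ (∑ j, α j) ≤ k ∧
      (∑ i, v i * mpseval (mpderiv (F i) α) 0) ≠ 0

/-- `M` is of type `k`: of type at most `k` at each of its points, `k` least such. -/
def IsOfType {n : ℕ} (d : ℕ) (M : Set (Fin n → K)) (k : ℕ) : Prop :=
  0 < k ∧ (∀ x ∈ M, TypeAtMost d M x k) ∧
    ∀ k', (∀ x ∈ M, TypeAtMost d M x k') → k ≤ k'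

/-- `μS` is the measure on the manifold `S ⊆ K^n` induced, via the isometric charts
of `S` (namely the coordinate projections `x ↦ x ∘ ι`), from the Haar measure `lamd` on
`K^d` normalized so that `O_K^d` has measure `1`. -/
def IsInducedMeasure [MeasurableSpace K] {n : ℕ} (d : ℕ) (S : Set (Fin n → K))
    (μS : Measure (Fin n → K)) (lamd : Measure (Fin d → K)) : Prop :=
  μS {x | x ∉ S} = 0 ∧
  ∀ x0 ∈ S, ∀ ι c F, IsChartAt d S x0 ι c F →
    ∀ A : Set (Fin n → K), MeasurableSet A → A ⊆ S ∩ {x | ∀ i, ‖x i - x0 i‖ ≤ ‖c‖} →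
      μS A = lamd ((fun x : Fin n → K => x ∘ ι) '' A)

/-! ### Maximal function and Riesz kernel on `K^n` -/

/-- The Hardy–Littlewood maximal function on `K^n`, where the balls are the sets
`a + b ⬝ O_K^n` with `b ≠ 0`. -/
noncomputable def maximalFn [MeasurableSpace K] {n : ℕ} (μ : Measure (Fin n → K))
    (f : (Fin n → K) → ℂ) (x : Fin n → K) : ℝ :=
  sSup {r : ℝ | ∃ (a : Fin n → K) (b : K), b ≠ 0 ∧ (∀ i, ‖x i - a i‖ ≤ ‖b‖) ∧
    r = (μ {y | ∀ i, ‖y i - a i‖ ≤ ‖b‖}).toReal⁻¹ *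
      ∫ y in {y : Fin n → K | ∀ i, ‖y i - a i‖ ≤ ‖b‖}, ‖f y‖ ∂μ}

/-- The kernel `y ↦ |y|^{-γ}` on `K^n`, extended by `0` at `0`. -/
noncomputable def rieszKernel {n : ℕ} (γ : ℝ) (y : Fin n → K) : ℂ :=
  if y = 0 then 0 else ((‖y‖ ^ (-γ) : ℝ) : ℂ)

end VdC

/-!
Modulo `M_K` the power series `y f` is a polynomial `P` on `O_K`, so the integral is the average of
`ψ (P x)` over the residue classes modulo a high power of `π`. Let `d` be the number of integral
roots of `P'` in an algebraic closure, which is the last index of a coefficient of maximal norm,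
and pass to the residue classes modulo `π`. If these roots do not all lie over a single class of
`O_K`, then `d` drops in every class. Otherwise the phase is nonstationary on all classes but one,
and these contribute zero. So each step, with at most `d` exceptions, gains a factor `1 / q`, as
long as the `m`-th derivative of the rescaled phase stays large; this allows about
`log_q |y f^{(m)}| / m` steps and gives the exponent `-1/m`. A preliminary rescaling by `π ^ (e m)`
absorbs the factorials and binomial coefficients divisible by `p` and makes `d ≤ m - 1`.
-/

namespace VdC

open Polynomial
open scoped BigOperators

/-! ### The Weierstrass degree -/

/-- `a d` has maximal norm among the coefficients `a i`, and `d` is the last index with this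
property. For convergent power series this is the degree in Weierstrass preparation; it
is `IsRegularOfDeg a d` up to multiplication of `a` by a nonzero scalar. For polynomials it is
applied to `P.coeff`. -/
structure HasWeierstrassDegree {K : Type*} [NormedField K] (a : ℕ → K) (d : ℕ) : Prop where
  norm_le : ∀ i, ‖a i‖ ≤ ‖a d‖
  norm_lt : ∀ i, d < i → ‖a i‖ < ‖a d‖

namespace HasWeierstrassDegree

section NormedField

variable {K : Type*} [NormedField K] {a : ℕ → K} {d : ℕ}

lemma norm_pos (h : HasWeierstrassDegree a d) : 0 < ‖a d‖ :=
  (norm_nonneg _).trans_lt (h.norm_lt (d + 1) d.lt_succ_self)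

lemma ne_zero (h : HasWeierstrassDegree a d) : a d ≠ 0 := norm_pos_iff.1 h.norm_pos

lemma of_forall_pos_lt (h : ∀ i, 0 < i → ‖a i‖ < ‖a 0‖) : HasWeierstrassDegree a 0 where
  norm_le i := by
    rcases i.eq_zero_or_pos with rfl | hi
    exacts [le_rfl, (h i hi).le]
  norm_lt := h

lemma exists_le {M : ℕ} (h : ∀ i, M < i → ‖a i‖ < ‖a M‖) :
    ∃ d ≤ M, HasWeierstrassDegree a d := by
  obtain ⟨d, hd, hmax⟩ := (Finset.range (M + 1)).exists_max_image
    (fun i => toLex (‖a i‖, i)) Finset.nonempty_range_add_one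
  simp only [Finset.mem_range, Nat.lt_succ_iff] at hd hmax
  have le_of_le : ∀ i ≤ M, ‖a i‖ ≤ ‖a d‖ := fun i hi => by
    rcases Prod.Lex.le_iff.1 (hmax i hi) with h | h
    exacts [h.le, h.1.le]
  have lt_of_lt : ∀ i, M < i → ‖a i‖ < ‖a d‖ := fun i hi =>
    (h i hi).trans_le (le_of_le M le_rfl)
  refine ⟨d, hd, fun i => ?_, fun i hi => ?_⟩
  · rcases le_or_gt i M with hiM | hiM
    exacts [le_of_le i hiM, (lt_of_lt i hiM).le]
  · rcases le_or_gt i M with hiM | hiM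
    · rcases Prod.Lex.le_iff.1 (hmax i hiM) with h | h
      exacts [h, absurd h.2 hi.not_ge]
    · exact lt_of_lt i hiM

lemma const_mul (h : HasWeierstrassDegree a d) {c : K} (hc : c ≠ 0) :
    HasWeierstrassDegree (fun i => c * a i) d where
  norm_le i := by
    simpa only [norm_mul] using mul_le_mul_of_nonneg_left (h.norm_le i) (norm_nonneg c)
  norm_lt i hi := by
    simpa only [norm_mul] using mul_lt_mul_of_pos_left (h.norm_lt i hi) (norm_pos_iff.2 hc)

lemma exists_le_mul_pow (h : HasWeierstrassDegree a d) {c : K} (hc0 : c ≠ 0) (hc : ‖c‖ ≤ 1) :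
    ∃ d' ≤ d, HasWeierstrassDegree (fun i => a i * c ^ i) d' := by
  refine exists_le fun i hi => ?_
  simp only [norm_mul, norm_pow]
  exact mul_lt_mul (h.norm_lt i hi) (pow_le_pow_of_le_one (norm_nonneg c) hc hi.le)
    (pow_pos (norm_pos_iff.2 hc0) i) h.norm_pos.le

lemma norm_lt_of_mul_pow {c : K} (hc0 : c ≠ 0) (hc : ‖c‖ < 1)
    (h : HasWeierstrassDegree (fun i => a i * c ^ i) d) {i : ℕ} (hi : i < d) :
    ‖a i‖ < ‖a d‖ := by
  have had : 0 < ‖a d‖ := norm_pos_iff.2 (left_ne_zero_of_mul h.ne_zero)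
  have hle := h.norm_le i
  simp only [norm_mul, norm_pow] at hle
  refine lt_of_mul_lt_mul_right (hle.trans_lt ?_) (pow_nonneg (norm_nonneg c) i)
  exact mul_lt_mul_of_pos_left (pow_lt_pow_right_of_lt_one₀ (norm_pos_iff.2 hc0) hc hi) had

end NormedField

end HasWeierstrassDegree

section Taylor

variable {K : Type*} [NormedField K] [IsUltrametricDist K]

lemma norm_sum_lt_of_forall_lt {ι E : Type*} [SeminormedAddCommGroup E] [IsUltrametricDist E]
    {s : Finset ι} {f : ι → E} {C : ℝ} (hC : 0 < C) (h : ∀ i ∈ s, ‖f i‖ < C) :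
    ‖∑ i ∈ s, f i‖ < C := by
  rcases s.eq_empty_or_nonempty with rfl | hs
  · simpa only [Finset.sum_empty, norm_zero] using hC
  · exact (hs.norm_sum_le_sup'_norm f).trans_lt ((Finset.sup'_lt_iff hs).2 h)

lemma coeff_taylor_eq_sum {R : Type*} [CommSemiring R] (P : R[X]) (u : R) (i : ℕ) :
    (taylor u P).coeff i = ∑ k ∈ Finset.range (P.natDegree + 1),
      ((k + i).choose i : R) * P.coeff (k + i) * u ^ k := by
  rw [taylor_coeff, eval_eq_sum_range' (Nat.lt_succ_of_le ((natDegree_hasseDeriv_le P i).trans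
    (Nat.sub_le _ _)))]
  simp only [hasseDeriv_coeff]

lemma norm_natCast_mul_mul_pow_le (n k : ℕ) (x : K) {u : K} (hu : ‖u‖ ≤ 1) :
    ‖(n : K) * x * u ^ k‖ ≤ ‖x‖ := by
  rw [norm_mul, norm_mul, norm_pow]
  calc ‖(n : K)‖ * ‖x‖ * ‖u‖ ^ k ≤ 1 * ‖x‖ * 1 := by
        gcongr
        exacts [IsUltrametricDist.norm_natCast_le_one K n, pow_le_one₀ (norm_nonneg u) hu]
    _ = ‖x‖ := by ring

variable {P : K[X]} {d : ℕ} {u : K}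

lemma norm_coeff_taylor_le {C : ℝ} (hC : 0 ≤ C) (h : ∀ i, ‖P.coeff i‖ ≤ C) (hu : ‖u‖ ≤ 1)
    (i : ℕ) : ‖(taylor u P).coeff i‖ ≤ C := by
  rw [coeff_taylor_eq_sum]
  exact IsUltrametricDist.norm_sum_le_of_forall_le_of_nonneg hC fun k _ =>
    (norm_natCast_mul_mul_pow_le _ k _ hu).trans (h _)

lemma norm_coeff_taylor_lt {C : ℝ} (hC : 0 < C) (h : ∀ i, d ≤ i → ‖P.coeff i‖ < C)
    (hu : ‖u‖ ≤ 1) {i : ℕ} (hi : d ≤ i) : ‖(taylor u P).coeff i‖ < C := by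
  rw [coeff_taylor_eq_sum]
  exact norm_sum_lt_of_forall_lt hC fun k _ =>
    (norm_natCast_mul_mul_pow_le _ k _ hu).trans_lt (h _ (by omega))

lemma norm_eval_lt {C : ℝ} (hC : 0 < C) (h : ∀ i, ‖P.coeff i‖ < C) (hu : ‖u‖ ≤ 1) :
    ‖P.eval u‖ < C := by
  rw [← taylor_coeff_zero]
  exact norm_coeff_taylor_lt hC (fun i _ => h i) hu le_rfl

lemma norm_coeff_taylor_eq (h : ∀ i, d < i → ‖P.coeff i‖ < ‖P.coeff d‖) (hu : ‖u‖ ≤ 1) :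
    ‖(taylor u P).coeff d‖ = ‖P.coeff d‖ := by
  have hhead : ((0 + d).choose d : K) * P.coeff (0 + d) * u ^ 0 = P.coeff d := by simp
  rw [coeff_taylor_eq_sum, IsUltrametricDist.isNonarchimedean_norm.apply_sum_eq_of_lt
    (fun x => (norm_neg x).symm) (Finset.mem_range.2 P.natDegree.succ_pos) fun k _ hk => ?_, hhead]
  rw [hhead]
  exact (norm_natCast_mul_mul_pow_le _ k _ hu).trans_lt (h _ (by omega))

lemma HasWeierstrassDegree.taylor (h : HasWeierstrassDegree P.coeff d) (hu : ‖u‖ ≤ 1) :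
    HasWeierstrassDegree (taylor u P).coeff d := by
  have hd := norm_coeff_taylor_eq h.norm_lt hu
  refine ⟨fun i => ?_, fun i hi => ?_⟩ <;> rw [hd]
  · exact norm_coeff_taylor_le h.norm_pos.le h.norm_le hu i
  · exact norm_coeff_taylor_lt h.norm_pos h.norm_lt hu hi

lemma norm_eval_eq_of_dominant (h : ∀ i, i ≠ d → ‖P.coeff i‖ < ‖P.coeff d‖) (hu : ‖u‖ = 1) :
    ‖P.eval u‖ = ‖P.coeff d‖ := by
  have hterm : ∀ i, ‖P.coeff i * u ^ i‖ = ‖P.coeff i‖ := fun i => by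
    rw [norm_mul, norm_pow, hu, one_pow, mul_one]
  have hd : d ∈ Finset.range (P.natDegree + 1) := by
    have h0 : P.coeff d ≠ 0 :=
      norm_pos_iff.1 ((norm_nonneg _).trans_lt (h (d + 1) d.succ_ne_self))
    exact Finset.mem_range_succ_iff.2 (le_natDegree_of_ne_zero h0)
  rw [eval_eq_sum_range, IsUltrametricDist.isNonarchimedean_norm.apply_sum_eq_of_lt
    (fun x => (norm_neg x).symm) hd fun i _ hi => ?_, hterm]
  simpa only [hterm] using h i hi

end Taylor

/-- The polynomial `P (u + c X)`. -/
noncomputable def rescale {R : Type*} [CommSemiring R] (P : R[X]) (u c : R) : R[X] :=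
  (taylor u P).comp (C c * X)

section Rescale

variable {R : Type*} [CommSemiring R]

lemma coeff_rescale (P : R[X]) (u c : R) (i : ℕ) :
    (rescale P u c).coeff i = (taylor u P).coeff i * c ^ i :=
  comp_C_mul_X_coeff

lemma coeff_rescale_fun (P : R[X]) (u c : R) :
    (rescale P u c).coeff = fun i => (taylor u P).coeff i * c ^ i :=
  funext (coeff_rescale P u c)

lemma eval_rescale (P : R[X]) (u c x : R) : (rescale P u c).eval x = P.eval (u + c * x) := by
  simp [rescale, eval_comp, taylor_eval, add_comm]

lemma derivative_rescale (P : R[X]) (u c : R) :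
    derivative (rescale P u c) = C c * rescale (derivative P) u c := by
  simp [rescale, taylor_apply, derivative_comp]

lemma natCast_succ_mul_coeff_rescale (P : R[X]) (u c : R) (i : ℕ) :
    ((i + 1 : ℕ) : R) * (rescale P u c).coeff (i + 1) =
      (taylor u (derivative P)).coeff i * c ^ (i + 1) := by
  rw [mul_comm, Nat.cast_succ, ← coeff_derivative, derivative_rescale, coeff_C_mul, coeff_rescale,
    pow_succ]
  ring

lemma iterate_derivative_rescale (P : R[X]) (u c : R) (k : ℕ) :
    derivative^[k] (rescale P u c) = C (c ^ k) * rescale (derivative^[k] P) u c := by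
  induction k with
  | zero => simp
  | succ k ih =>
    rw [Function.iterate_succ_apply', ih, derivative_C_mul, derivative_rescale,
      Function.iterate_succ_apply', pow_succ, C_mul, mul_assoc]

end Rescale

lemma HasWeierstrassDegree.C_mul {K : Type*} [NormedField K] {P : K[X]} {d : ℕ}
    (h : HasWeierstrassDegree P.coeff d) {c : K} (hc : c ≠ 0) :
    HasWeierstrassDegree (C c * P).coeff d := by
  simpa only [← coeff_C_mul] using h.const_mul hc

lemma HasWeierstrassDegree.derivative_rescale {K : Type*} [NormedField K] {P : K[X]} {d : ℕ}
    {u c : K} (h : HasWeierstrassDegree (rescale (derivative P) u c).coeff d) (hc : c ≠ 0) :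
    HasWeierstrassDegree (derivative (rescale P u c)).coeff d := by
  rw [VdC.derivative_rescale]
  exact h.C_mul hc

namespace HasWeierstrassDegree

variable {K : Type*} [NormedField K] [IsUltrametricDist K] {P : K[X]} {d : ℕ}

lemma exists_le_rescale (h : HasWeierstrassDegree P.coeff d) {u c : K} (hu : ‖u‖ ≤ 1)
    (hc0 : c ≠ 0) (hc : ‖c‖ ≤ 1) : ∃ d' ≤ d, HasWeierstrassDegree (rescale P u c).coeff d' := by
  rw [coeff_rescale_fun]
  exact (h.taylor hu).exists_le_mul_pow hc0 hc

lemma rescale_of_zero (h : HasWeierstrassDegree P.coeff 0) {u c : K} (hu : ‖u‖ ≤ 1)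
    (hc0 : c ≠ 0) (hc : ‖c‖ ≤ 1) : HasWeierstrassDegree (rescale P u c).coeff 0 := by
  obtain ⟨d', hd', h'⟩ := h.exists_le_rescale hu hc0 hc
  rwa [Nat.le_zero.1 hd'] at h'

/-- Reducing modulo the maximal ideal, `P` has all its `d` roots in the residue class of `t`, so it
has none in the class of `t'`. -/
lemma rescale_zero_of_rescale (h : HasWeierstrassDegree P.coeff d) {t t' c : K} (ht : ‖t‖ ≤ 1)
    (ht' : ‖t'‖ ≤ 1) (htt' : ‖t' - t‖ = 1) (hc0 : c ≠ 0) (hc : ‖c‖ < 1)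
    (hd : HasWeierstrassDegree (rescale P t c).coeff d) :
    HasWeierstrassDegree (rescale P t' c).coeff 0 := by
  have hdom : ∀ i, i ≠ d → ‖(Polynomial.taylor t P).coeff i‖ < ‖(Polynomial.taylor t P).coeff d‖ :=
    fun i hi => by
      rcases lt_or_gt_of_ne hi with hlt | hgt
      · rw [coeff_rescale_fun] at hd
        exact norm_lt_of_mul_pow hc0 hc hd hlt
      · exact (h.taylor ht).norm_lt i hgt
  have heval : ‖P.eval t'‖ = ‖P.coeff d‖ := by
    rw [← norm_coeff_taylor_eq h.norm_lt ht, ← norm_eval_eq_of_dominant hdom htt',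
      taylor_eval, sub_add_cancel]
  refine of_forall_pos_lt fun i hi => ?_
  rw [coeff_rescale, coeff_rescale, pow_zero, mul_one, taylor_coeff_zero, heval, norm_mul, norm_pow]
  calc ‖(Polynomial.taylor t' P).coeff i‖ * ‖c‖ ^ i ≤ ‖P.coeff d‖ * ‖c‖ ^ i := by
        gcongr
        exact norm_coeff_taylor_le h.norm_pos.le h.norm_le ht' i
    _ < ‖P.coeff d‖ := mul_lt_of_lt_one_right h.norm_pos (pow_lt_one₀ (norm_nonneg c) hc hi.ne')

end HasWeierstrassDegree

section Derivative

open Nat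

variable {K : Type*} [NontriviallyNormedField K]

lemma iterate_dcoeff_apply (a : ℕ → K) (k i : ℕ) :
    (dcoeff^[k] a) i = (k ! : K) * ((i + k).choose k * a (i + k)) := by
  have key : (dcoeff^[k] a) i = ((i + k).descFactorial k : K) * a (i + k) := by
    induction k generalizing i with
    | zero => simp
    | succ k ih =>
      rw [Function.iterate_succ_apply', dcoeff, ih, ← mul_assoc, ← Nat.cast_mul,
        Nat.descFactorial_succ, add_right_comm, ← add_assoc,
        show i + k + 1 - k = i + 1 by omega]
  rw [key, Nat.descFactorial_eq_factorial_mul_choose, Nat.cast_mul, mul_assoc]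

lemma iterate_dcoeff_apply_zero (a : ℕ → K) (k : ℕ) :
    (dcoeff^[k] a) 0 = (k ! : K) * a k := by
  simp [iterate_dcoeff_apply]

lemma coeff_derivative_eq_dcoeff (P : K[X]) : (derivative P).coeff = dcoeff P.coeff := by
  ext i
  simp [coeff_derivative, dcoeff, mul_comm]

lemma coeff_iterate_derivative_eq_dcoeff (P : K[X]) (k : ℕ) :
    (derivative^[k] P).coeff = dcoeff^[k] P.coeff :=
  (show Function.Semiconj (coeff : K[X] → ℕ → K) derivative dcoeff from
    coeff_derivative_eq_dcoeff).iterate_right k P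

lemma iterate_derivative_taylor {R : Type*} [CommSemiring R] (P : R[X]) (u : R) (k : ℕ) :
    derivative^[k] (taylor u P) = taylor u (derivative^[k] P) := by
  have h : Function.Commute derivative (taylor u : R[X] → R[X]) := fun P => by
    simp [taylor_apply, derivative_comp]
  exact (h.iterate_left k) P

section Ultrametric

variable [IsUltrametricDist K] {a : ℕ → K}

lemma HasWeierstrassDegree.iterate_dcoeff_zero {d : ℕ} (h : HasWeierstrassDegree a d)
    (hd : (d ! : K) ≠ 0) : HasWeierstrassDegree (dcoeff^[d] a) 0 := by
  refine of_forall_pos_lt fun i hi => ?_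
  rw [iterate_dcoeff_apply_zero, iterate_dcoeff_apply, norm_mul, norm_mul, norm_mul]
  refine mul_lt_mul_of_pos_left ?_ (norm_pos_iff.2 hd)
  exact (mul_le_of_le_one_left (norm_nonneg _)
    (IsUltrametricDist.norm_natCast_le_one K _)).trans_lt (h.norm_lt _ (by omega))

lemma norm_iterate_dcoeff_le (k i : ℕ) : ‖(dcoeff^[k] a) i‖ ≤ ‖a (i + k)‖ := by
  rw [iterate_dcoeff_apply, norm_mul, norm_mul]
  have hcast := IsUltrametricDist.norm_natCast_le_one K
  exact (mul_le_of_le_one_left (by positivity) (hcast _)).trans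
    (mul_le_of_le_one_left (by positivity) (hcast _))

end Ultrametric

end Derivative

section NormNatCast

open Nat

variable {K : Type*} [NormedField K] [IsUltrametricDist K] {p : ℕ}

lemma norm_natCast_eq_one_of_coprime (hp1 : ‖(p : K)‖ < 1) {n : ℕ} (h : p.Coprime n) :
    ‖(n : K)‖ = 1 := by
  refine (IsUltrametricDist.norm_natCast_le_one K n).antisymm (not_lt.1 fun hn => ?_)
  have hbezout : (1 : K) = p * (p.gcdA n : K) + n * (p.gcdB n : K) := by
    exact_mod_cast congrArg (Int.cast : ℤ → K) (h ▸ Nat.gcd_eq_gcd_ab p n)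
  have hlt : ∀ x : K, ∀ z : ℤ, ‖x‖ < 1 → ‖x * z‖ < 1 := fun x z hx => by
    rw [norm_mul]
    exact (mul_le_of_le_one_right (norm_nonneg x)
      (IsUltrametricDist.norm_intCast_le_one K z)).trans_lt hx
  have := IsUltrametricDist.norm_add_le_max ((p : K) * (p.gcdA n : K)) (n * (p.gcdB n : K))
  rw [← hbezout, norm_one] at this
  exact this.not_gt (max_lt (hlt _ _ hp1) (hlt _ _ hn))

lemma norm_natCast_eq_pow_factorization (hp : p.Prime) (hp1 : ‖(p : K)‖ < 1) {n : ℕ}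
    (hn : n ≠ 0) : ‖(n : K)‖ = ‖(p : K)‖ ^ n.factorization p := by
  conv_lhs => rw [← Nat.ordProj_mul_ordCompl_eq_self n p]
  rw [Nat.cast_mul, Nat.cast_pow, norm_mul, norm_pow,
    norm_natCast_eq_one_of_coprime hp1 (Nat.coprime_ordCompl hp hn), mul_one]

lemma norm_prime_pow_le_norm_natCast (hp : p.Prime) (hp1 : ‖(p : K)‖ < 1) {n s : ℕ} (hn : n ≠ 0)
    (h : n.factorization p ≤ s) : ‖(p : K)‖ ^ s ≤ ‖(n : K)‖ := by
  rw [norm_natCast_eq_pow_factorization hp hp1 hn]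
  exact pow_le_pow_of_le_one (norm_nonneg _) hp1.le h

lemma norm_prime_pow_le_norm_factorial (hp : p.Prime) (hp1 : ‖(p : K)‖ < 1) (n : ℕ) :
    ‖(p : K)‖ ^ n ≤ ‖(n ! : K)‖ :=
  norm_prime_pow_le_norm_natCast hp hp1 n.factorial_ne_zero
    ((Nat.factorization_factorial_le_div_pred hp n).trans (Nat.div_le_self _ _))

lemma norm_prime_pow_le_norm_choose (hp : p.Prime) (hp1 : ‖(p : K)‖ < 1) {n k s : ℕ} (hk : k ≤ n)
    (hs : n ≤ s + 1) : ‖(p : K)‖ ^ s ≤ ‖(n.choose k : K)‖ := by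
  refine norm_prime_pow_le_norm_natCast hp hp1 (Nat.choose_ne_zero hk) ?_
  rcases n.eq_zero_or_pos with rfl | hn
  · simp [Nat.le_zero.1 hk]
  have := Nat.log_lt_self p hn.ne'
  exact Nat.factorization_choose_le_log.trans (by omega)

end NormNatCast

/-- The binomial coefficients relating `a` to its `M`-th derivative decay at most exponentially,
so a rescaling of the variable absorbs them. -/
lemma HasWeierstrassDegree.exists_le_mul_pow_of_iterate_dcoeff {K : Type*}
    [NontriviallyNormedField K] [IsUltrametricDist K] {p M : ℕ}
    (hp : p.Prime) (hp1 : ‖(p : K)‖ < 1) {a : ℕ → K} (h : HasWeierstrassDegree (dcoeff^[M] a) 0)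
    {c : K} (hc0 : c ≠ 0) (hc : ‖c‖ ≤ ‖(p : K)‖ ^ (M + 1)) :
    ∃ d ≤ M, HasWeierstrassDegree (fun i => a i * c ^ i) d := by
  refine exists_le fun n hn => ?_
  obtain ⟨i, rfl⟩ := Nat.exists_eq_add_of_lt hn
  have hlt := h.norm_lt (i + 1) i.succ_pos
  rw [iterate_dcoeff_apply_zero, iterate_dcoeff_apply, norm_mul, norm_mul, norm_mul] at hlt
  have hchoose : ‖c‖ ^ (i + 1) ≤ ‖((i + 1 + M).choose M : K)‖ := by
    refine le_trans ?_ (norm_prime_pow_le_norm_choose (s := (M + 1) * (i + 1)) hp hp1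
      (Nat.le_add_left M (i + 1)) (by nlinarith))
    rw [pow_mul]
    gcongr
  rw [add_assoc, add_comm M, norm_mul, norm_mul, norm_pow, norm_pow, pow_add, ← mul_assoc]
  refine mul_lt_mul_of_pos_right ?_ (pow_pos (norm_pos_iff.2 hc0) M)
  calc ‖a (i + 1 + M)‖ * ‖c‖ ^ (i + 1)
      ≤ ‖((i + 1 + M).choose M : K)‖ * ‖a (i + 1 + M)‖ := by
        rw [mul_comm]
        gcongr
    _ < ‖a M‖ := lt_of_mul_lt_mul_left hlt (norm_nonneg _)

/-! ### Averages over residue classes -/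

lemma norm_sub_le_one {E : Type*} [SeminormedAddCommGroup E] [IsUltrametricDist E] {x y : E}
    (hx : ‖x‖ ≤ 1) (hy : ‖y‖ ≤ 1) : ‖x - y‖ ≤ 1 := by
  rw [sub_eq_add_neg]
  exact (IsUltrametricDist.norm_add_le_max x (-y)).trans (max_le hx ((norm_neg y).trans_le hy))

/-- `π` is a uniformizer and `T` a set of representatives of the residue field, so that every
integer is represented modulo `π ^ n` by exactly one of the digit expansions
`t₀ + π t₁ + ⋯ + π ^ (n - 1) tₙ₋₁` with `tᵢ ∈ T`. -/
structure IsDigitSystem {K : Type*} [NormedField K] (π : K) (T : Finset K) : Prop where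
  ne_zero : π ≠ 0
  norm_lt_one : ‖π‖ < 1
  exists_norm_eq_zpow : ∀ x : K, x ≠ 0 → ∃ k : ℤ, ‖x‖ = ‖π‖ ^ k
  norm_digit_le_one : ∀ t ∈ T, ‖t‖ ≤ 1
  existsUnique_digit : ∀ x : K, ‖x‖ ≤ 1 → ∃! t, t ∈ T ∧ ‖x - t‖ < 1

/-- The average of `F` over the integers modulo `π ^ n`, which are represented by the digit
expansions of length `n`. -/
noncomputable def digitAverage {K : Type*} [NormedField K] (π : K) (T : Finset K) :
    ℕ → (K → ℂ) → ℂ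
  | 0, F => F 0
  | n + 1, F => 𝔼 t ∈ T, digitAverage π T n fun x => F (t + π * x)

namespace IsDigitSystem

variable {K : Type*} [NormedField K] {π : K} {T : Finset K}

lemma norm_pos (h : IsDigitSystem π T) : 0 < ‖π‖ := norm_pos_iff.2 h.ne_zero

lemma norm_pow_le_one (h : IsDigitSystem π T) (n : ℕ) : ‖π ^ n‖ ≤ 1 := by
  rw [norm_pow]
  exact pow_le_one₀ (norm_nonneg π) h.norm_lt_one.le

lemma nonempty (h : IsDigitSystem π T) : T.Nonempty :=
  let ⟨t, ht, _⟩ := h.existsUnique_digit 0 (by simp)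
  ⟨t, ht.1⟩

lemma norm_le_of_norm_lt_one (h : IsDigitSystem π T) {x : K} (hx : ‖x‖ < 1) : ‖x‖ ≤ ‖π‖ := by
  rcases eq_or_ne x 0 with rfl | hx0
  · simp
  obtain ⟨k, hk⟩ := h.exists_norm_eq_zpow x hx0
  rw [hk, ← zpow_zero ‖π‖, zpow_lt_zpow_iff_right_of_lt_one₀ h.norm_pos h.norm_lt_one] at hx
  rw [hk]
  exact (zpow_le_zpow_right_of_le_one₀ h.norm_pos h.norm_lt_one.le (by omega)).trans_eq (zpow_one _)

lemma exists_norm_mul_pow_eq_one (h : IsDigitSystem π T) {x : K} (hx : 1 ≤ ‖x‖) :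
    ∃ s : ℕ, ‖x‖ * ‖π‖ ^ s = 1 := by
  obtain ⟨k, hk⟩ := h.exists_norm_eq_zpow x (norm_pos_iff.1 (one_pos.trans_le hx))
  rw [hk, ← zpow_zero ‖π‖, zpow_le_zpow_iff_right_of_lt_one₀ h.norm_pos h.norm_lt_one] at hx
  obtain ⟨s, hs⟩ := Int.exists_eq_neg_ofNat hx
  exact ⟨s, by rw [hk, hs, zpow_neg, zpow_natCast, inv_mul_cancel₀ (pow_ne_zero s h.norm_pos.ne')]⟩

lemma exists_eq_mul_of_norm_lt_one (h : IsDigitSystem π T) {x : K} (hx : ‖x‖ < 1) :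
    ∃ w, ‖w‖ ≤ 1 ∧ x = π * w := by
  refine ⟨x / π, ?_, (mul_div_cancel₀ x h.ne_zero).symm⟩
  rw [norm_div]
  exact div_le_one_of_le₀ (h.norm_le_of_norm_lt_one hx) (norm_nonneg π)

lemma norm_expect_le (h : IsDigitSystem π T) {f : K → ℂ} {C : ℝ} (hf : ∀ t ∈ T, ‖f t‖ ≤ C) :
    ‖𝔼 t ∈ T, f t‖ ≤ C :=
  (RCLike.norm_expect_le (K := ℂ)).trans (Finset.expect_le h.nonempty hf)

lemma digitAverage_const (h : IsDigitSystem π T) (z : ℂ) (n : ℕ) :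
    digitAverage π T n (fun _ => z) = z := by
  induction n with
  | zero => rfl
  | succ n ih => simp only [digitAverage, ih, Finset.expect_const h.nonempty]

variable [IsUltrametricDist K]

lemma norm_add_mul_le_one (h : IsDigitSystem π T) {u x : K} (hu : ‖u‖ ≤ 1) (hx : ‖x‖ ≤ 1) :
    ‖u + π * x‖ ≤ 1 := by
  refine (IsUltrametricDist.norm_add_le_max _ _).trans (max_le hu ?_)
  rw [norm_mul]
  exact mul_le_one₀ h.norm_lt_one.le (norm_nonneg x) hx

lemma norm_sub_eq_one (h : IsDigitSystem π T) {s t : K} (hs : s ∈ T) (ht : t ∈ T) (hst : s ≠ t) :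
    ‖s - t‖ = 1 := by
  have hs1 := h.norm_digit_le_one s hs
  refine (norm_sub_le_one hs1 (h.norm_digit_le_one t ht)).antisymm (not_lt.1 fun hlt => hst ?_)
  exact (h.existsUnique_digit s hs1).unique ⟨hs, by simp⟩ ⟨ht, hlt⟩

/-- Translation by `v` permutes the residue classes. -/
lemma expect_add_eq (h : IsDigitSystem π T) {G : K → ℂ}
    (hG : ∀ x w, ‖x‖ ≤ 1 → ‖w‖ ≤ 1 → G (x + π * w) = G x) {v : K} (hv : ‖v‖ ≤ 1) :
    𝔼 t ∈ T, G (v + t) = 𝔼 t ∈ T, G t := by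
  choose! r hr hunique using h.existsUnique_digit
  have hadd : ∀ t ∈ T, ‖v + t‖ ≤ 1 := fun t ht =>
    (IsUltrametricDist.norm_add_le_max v t).trans (max_le hv (h.norm_digit_le_one t ht))
  have hsub : ∀ t ∈ T, ‖t - v‖ ≤ 1 := fun t ht =>
    norm_sub_le_one (h.norm_digit_le_one t ht) hv
  refine Finset.expect_nbij' (fun t => r (v + t)) (fun t => r (t - v))
    (fun t ht => (hr _ (hadd t ht)).1) (fun t ht => (hr _ (hsub t ht)).1)
    (fun t ht => (hunique _ (hsub _ (hr _ (hadd t ht)).1) t ⟨ht, ?_⟩).symm)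
    (fun t ht => (hunique _ (hadd _ (hr _ (hsub t ht)).1) t ⟨ht, ?_⟩).symm) fun t ht => ?_
  · rw [sub_sub, norm_sub_rev]
    exact (hr _ (hadd t ht)).2
  · rw [add_comm, ← sub_sub_eq_add_sub, norm_sub_rev]
    exact (hr _ (hsub t ht)).2
  · obtain ⟨w, hw, heq⟩ := h.exists_eq_mul_of_norm_lt_one (hr _ (hadd t ht)).2
    rw [← hG _ w (h.norm_digit_le_one _ (hr _ (hadd t ht)).1) hw, ← heq, add_sub_cancel]

lemma digitAverage_congr (h : IsDigitSystem π T) {F G : K → ℂ} (hFG : ∀ x, ‖x‖ ≤ 1 → F x = G x)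
    (n : ℕ) : digitAverage π T n F = digitAverage π T n G := by
  induction n generalizing F G with
  | zero => exact hFG 0 (by simp)
  | succ n ih =>
    exact Finset.expect_congr rfl fun t ht => ih fun x hx =>
      hFG _ (h.norm_add_mul_le_one (h.norm_digit_le_one t ht) hx)

lemma norm_digitAverage_add_le (h : IsDigitSystem π T) {F : K → ℂ} {C : ℝ} {n : ℕ} (s : ℕ)
    (hF : ∀ u, ‖u‖ ≤ 1 → ‖digitAverage π T n fun x => F (u + π ^ s * x)‖ ≤ C) :
    ‖digitAverage π T (s + n) F‖ ≤ C := by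
  induction s generalizing F with
  | zero => simpa using hF 0 (by simp)
  | succ s ih =>
    rw [Nat.add_right_comm]
    refine h.norm_expect_le fun t ht => ih fun u hu => ?_
    simpa only [mul_add, pow_succ', mul_assoc, add_assoc] using
      hF _ (h.norm_add_mul_le_one (h.norm_digit_le_one t ht) hu)

lemma norm_digitAverage_le (h : IsDigitSystem π T) {F : K → ℂ} {C : ℝ}
    (hF : ∀ x, ‖x‖ ≤ 1 → ‖F x‖ ≤ C) (n : ℕ) : ‖digitAverage π T n F‖ ≤ C :=
  h.norm_digitAverage_add_le (n := 0) n fun u hu => by simpa [digitAverage] using hF u hu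

lemma digitAverage_translate (h : IsDigitSystem π T) {F : K → ℂ} {n : ℕ}
    (hF : ∀ x w, ‖x‖ ≤ 1 → ‖w‖ ≤ 1 → F (x + π ^ n * w) = F x) {v : K} (hv : ‖v‖ ≤ 1) :
    digitAverage π T n (fun x => F (v + x)) = digitAverage π T n F := by
  induction n generalizing F v with
  | zero => simpa [digitAverage] using hF 0 v (by simp) hv
  | succ n ih =>
    simp only [digitAverage, ← add_assoc]
    refine h.expect_add_eq (G := fun u => digitAverage π T n fun x => F (u + π * x))
      (fun u w hu hw => ?_) hv
    simp only [add_assoc, ← mul_add]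
    refine ih (F := fun x => F (u + π * x)) (fun x y hx hy => ?_) hw
    simpa only [mul_add, pow_succ', mul_assoc, add_assoc] using
      hF _ y (h.norm_add_mul_le_one hu hx) hy

end IsDigitSystem

section Integral

variable {G : Type*} [MeasurableSpace G] {μ : Measure G}

lemma setIntegral_eq_smul_of_forall_mem {E : Type*} [NormedAddCommGroup E] [NormedSpace ℝ E]
    [CompleteSpace E] {s : Set G} {f : G → E} {z : E} (hf : AEStronglyMeasurable f (μ.restrict s))
    (hz : ∀ x ∈ s, f x = z) : ∫ x in s, f x ∂μ = μ.real s • z := by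
  have hfz : f =ᵐ[μ.restrict s] fun _ => z :=
    (ae_restrict_iff₀ (hf.nullMeasurableSet_eq_fun aestronglyMeasurable_const)).2 (ae_of_all _ hz)
  rw [integral_congr_ae hfz, setIntegral_const]

variable [AddGroup G] [μ.IsAddLeftInvariant]

lemma aemeasurable_add_left (g : G) : AEMeasurable (g + ·) μ := by
  rcases eq_or_ne μ 0 with rfl | hμ
  · exact aemeasurable_zero_measure
  · exact .of_map_ne_zero (by rwa [Measure.IsAddLeftInvariant.map_add_left_eq_self])

lemma measure_preimage_add_left (g : G) (s : Set G) : μ ((g + ·) ⁻¹' s) = μ s := by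
  have hle : ∀ (g : G) (s : Set G), μ ((g + ·) ⁻¹' s) ≤ μ s := fun g s =>
    calc μ ((g + ·) ⁻¹' s) ≤ μ ((g + ·) ⁻¹' toMeasurable μ s) :=
          measure_mono (Set.preimage_mono (subset_toMeasurable μ s))
      _ = μ.map (g + ·) (toMeasurable μ s) :=
          (Measure.map_apply_of_aemeasurable (aemeasurable_add_left g)
            (measurableSet_toMeasurable μ s)).symm
      _ = μ s := by
          rw [Measure.IsAddLeftInvariant.map_add_left_eq_self, measure_toMeasurable]
  refine (hle g s).antisymm ?_
  simpa [Set.preimage_preimage] using hle (-g) ((g + ·) ⁻¹' s)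

lemma map_add_left_restrict {g : G} {s : Set G} (hs : (g + ·) ⁻¹' s = s) :
    (μ.restrict s).map (g + ·) = μ.restrict s := by
  have hg : AEMeasurable (g + ·) (μ.restrict s) := (aemeasurable_add_left g).restrict
  ext t ht
  rw [Measure.map_apply_of_aemeasurable hg ht, Measure.restrict_apply₀ (hg.nullMeasurable ht),
    Measure.restrict_apply ht, ← measure_preimage_add_left g (t ∩ s), Set.preimage_inter, hs]

lemma integrable_comp_add_left_restrict {E : Type*} [NormedAddCommGroup E] {g : G} {s : Set G}
    (hs : (g + ·) ⁻¹' s = s) {f : G → E} (hf : Integrable f (μ.restrict s)) :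
    Integrable (fun x => f (g + x)) (μ.restrict s) := by
  rw [← map_add_left_restrict hs] at hf
  exact hf.comp_aemeasurable (aemeasurable_add_left g).restrict

lemma setIntegral_comp_add_left {E : Type*} [NormedAddCommGroup E] [NormedSpace ℝ E] {g : G}
    {s : Set G} (hs : (g + ·) ⁻¹' s = s) {f : G → E}
    (hf : AEStronglyMeasurable f (μ.restrict s)) :
    ∫ x in s, f (g + x) ∂μ = ∫ x in s, f x ∂μ := by
  rw [← map_add_left_restrict hs] at hf
  rw [← integral_map (aemeasurable_add_left g).restrict hf, map_add_left_restrict hs]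

end Integral

lemma preimage_add_left_norm_le_one {E : Type*} [SeminormedAddCommGroup E]
    [IsUltrametricDist E] {g : E} (hg : ‖g‖ ≤ 1) :
    (g + ·) ⁻¹' {x : E | ‖x‖ ≤ 1} = {x | ‖x‖ ≤ 1} := by
  ext x
  refine ⟨fun hx => ?_, fun hx => ?_⟩
  · simpa using norm_sub_le_one hx hg
  · exact (IsUltrametricDist.norm_add_le_max g x).trans (max_le hg hx)

namespace IsDigitSystem

variable {K : Type*} [NormedField K] [IsUltrametricDist K] {π : K} {T : Finset K}
  [MeasurableSpace K] {μ : Measure K} [μ.IsAddLeftInvariant]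

lemma setIntegral_digitAverage (h : IsDigitSystem π T) {F : K → ℂ}
    (hF : IntegrableOn F {x | ‖x‖ ≤ 1} μ) (n : ℕ) {c : K} (hc : ‖c‖ ≤ 1) :
    IntegrableOn (fun x => digitAverage π T n fun u => F (x + c * u)) {x | ‖x‖ ≤ 1} μ ∧
      ∫ x in {x | ‖x‖ ≤ 1}, digitAverage π T n (fun u => F (x + c * u)) ∂μ =
        ∫ x in {x | ‖x‖ ≤ 1}, F x ∂μ := by
  induction n generalizing c with
  | zero => simpa [digitAverage] using hF
  | succ n ih =>
    obtain ⟨hint, heq⟩ := ih (c := c * π) (by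
      rw [norm_mul]; exact mul_le_one₀ hc (norm_nonneg π) h.norm_lt_one.le)
    have hsplit : ∀ x t u : K, x + c * (t + π * u) = c * t + x + c * π * u := fun x t u => by ring
    have htrans : ∀ t ∈ T, (c * t + ·) ⁻¹' {x : K | ‖x‖ ≤ 1} = {x | ‖x‖ ≤ 1} := fun t ht =>
      preimage_add_left_norm_le_one (by
        rw [norm_mul]; exact mul_le_one₀ hc (norm_nonneg t) (h.norm_digit_le_one t ht))
    have hint' := fun t ht => integrable_comp_add_left_restrict (htrans t ht) hint
    simp only [digitAverage, hsplit, Finset.expect_eq_sum_div_card]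
    refine ⟨(integrable_finsetSum _ hint').div_const _, ?_⟩
    rw [integral_div, integral_finsetSum _ hint',
      Finset.sum_congr rfl fun t ht => (setIntegral_comp_add_left (htrans t ht) hint.1).trans heq,
      Finset.sum_const, nsmul_eq_mul, mul_div_cancel_left₀]
    exact_mod_cast h.nonempty.card_pos.ne'

lemma norm_setIntegral_le_norm_digitAverage (h : IsDigitSystem π T) (hμ : μ {x : K | ‖x‖ ≤ 1} = 1)
    {F G : K → ℂ} (hFG : ∀ x, ‖x‖ ≤ 1 → F x = G x) {n : ℕ}
    (hG : ∀ x w, ‖x‖ ≤ 1 → ‖w‖ ≤ 1 → G (x + π ^ n * w) = G x) :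
    ‖∫ x in {x : K | ‖x‖ ≤ 1}, F x ∂μ‖ ≤ ‖digitAverage π T n G‖ := by
  by_cases hF : IntegrableOn F {x : K | ‖x‖ ≤ 1} μ
  · obtain ⟨hint, heq⟩ := h.setIntegral_digitAverage hF n (c := 1) (by simp)
    rw [← heq, setIntegral_eq_smul_of_forall_mem hint.1 (z := digitAverage π T n G),
      Measure.real, hμ, ENNReal.toReal_one, one_smul]
    intro x hx
    rw [← h.digitAverage_translate hG hx]
    exact h.digitAverage_congr (fun u hu => by
      simpa using hFG (x + u) ((IsUltrametricDist.norm_add_le_max x u).trans (max_le hx hu))) n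
  · rw [integral_undef hF, norm_zero]
    exact norm_nonneg _

end IsDigitSystem

/-! ### Nonstationary phase -/

section LinearPhase

variable {K : Type*} [NormedField K] [IsUltrametricDist K] {P : K[X]} {u c : K}

lemma norm_coeff_one_rescale_eq_one (hP : HasWeierstrassDegree (derivative P).coeff 0)
    (hu : ‖u‖ ≤ 1) (hc : ‖(derivative P).coeff 0‖ * ‖c‖ = 1) :
    ‖(rescale P u c).coeff 1‖ = 1 := by
  have h := natCast_succ_mul_coeff_rescale P u c 0
  rw [zero_add, Nat.cast_one, one_mul, pow_one] at h
  rw [h, norm_mul, norm_coeff_taylor_eq hP.norm_lt hu, hc]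

lemma norm_coeff_rescale_lt_one (hP : HasWeierstrassDegree (derivative P).coeff 0) (hu : ‖u‖ ≤ 1)
    (hc : ‖(derivative P).coeff 0‖ * ‖c‖ = 1) {p : ℕ} (hp : p.Prime) (hp1 : ‖(p : K)‖ < 1)
    (hcp : ‖c‖ ≤ ‖(p : K)‖) {i : ℕ} (hi : 2 ≤ i) : ‖(rescale P u c).coeff i‖ < 1 := by
  obtain ⟨i, rfl⟩ := Nat.exists_eq_add_of_le' hi
  have hc0 : 0 < ‖c‖ := pos_of_mul_pos_right (hc.symm ▸ one_pos) (norm_nonneg _)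
  have hcoeff_lt : ‖(taylor u (derivative P)).coeff (i + 1)‖ * ‖c‖ < 1 := by
    rw [← hc]
    exact mul_lt_mul_of_pos_right (norm_coeff_taylor_lt hP.norm_pos hP.norm_lt hu i.succ_pos) hc0
  have hpow : ‖c‖ ^ (i + 1) ≤ ‖((i + 2 : ℕ) : K)‖ :=
    calc ‖c‖ ^ (i + 1) ≤ ‖(p : K)‖ ^ (i + 1) := by gcongr
      _ ≤ ‖((i + 2 : ℕ) : K)‖ := norm_prime_pow_le_norm_natCast hp hp1 (by omega)
          (Nat.le_of_lt_succ (Nat.factorization_lt p (by omega)))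
  refine lt_of_mul_lt_mul_left ?_ (norm_nonneg ((i + 2 : ℕ) : K))
  calc ‖((i + 2 : ℕ) : K)‖ * ‖(rescale P u c).coeff (i + 2)‖
      = ‖(taylor u (derivative P)).coeff (i + 1)‖ * ‖c‖ * ‖c‖ ^ (i + 1) := by
        rw [← norm_mul, natCast_succ_mul_coeff_rescale, norm_mul, norm_pow, pow_succ']
        ring
    _ < ‖c‖ ^ (i + 1) := mul_lt_of_lt_one_left (pow_pos hc0 _) hcoeff_lt
    _ ≤ ‖((i + 2 : ℕ) : K)‖ * 1 := hpow.trans_eq (mul_one _).symm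

end LinearPhase

section Character

variable {K : Type*} [NontriviallyNormedField K] {ψ : K → ℂ}

lemma IsAddChar.map_add_of_norm_lt_one (hψ : IsAddChar ψ) (x : K) {w : K} (hw : ‖w‖ < 1) :
    ψ (x + w) = ψ x := by
  rw [hψ.map_add, hψ.triv w hw, mul_one]

variable [IsUltrametricDist K] {π : K} {T : Finset K}

lemma IsAddChar.expect_mul_eq_zero (hψ : IsAddChar ψ) (hT : IsDigitSystem π T) {β : K}
    (hβ : ‖β‖ = 1) : 𝔼 t ∈ T, ψ (β * t) = 0 := by
  have hβ0 : β ≠ 0 := norm_ne_zero_iff.1 (hβ.symm ▸ one_ne_zero)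
  obtain ⟨x, hx, hx1⟩ := hψ.nontriv
  have htrans := hT.expect_add_eq (G := fun t => ψ (β * t)) (v := x / β)
    (fun y w _ hw => by
      rw [mul_add]
      refine hψ.map_add_of_norm_lt_one _ ?_
      rw [norm_mul, norm_mul, hβ, one_mul]
      exact mul_lt_one_of_nonneg_of_lt_one_left (norm_nonneg π) hT.norm_lt_one hw)
    (by rwa [norm_div, hβ, div_one])
  simp only [mul_add, mul_div_cancel₀ x hβ0, hψ.map_add, ← Finset.mul_expect] at htrans
  exact (mul_left_eq_self₀.1 htrans).resolve_left hx1

lemma IsAddChar.comp_eval_eq_of_norm_coeff_lt_one (hψ : IsAddChar ψ) {R : K[X]}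
    (hR : ∀ i, 2 ≤ i → ‖R.coeff i‖ < 1) {y : K} (hy : ‖y‖ ≤ 1) :
    ψ (R.eval y) = ψ (R.coeff 0) * ψ (R.coeff 1 * y) := by
  have hsplit : R.eval y = R.coeff 0 + R.coeff 1 * y + R.divX.divX.eval y * y ^ 2 := by
    conv_lhs => rw [← divX_mul_X_add R, ← divX_mul_X_add R.divX]
    simp only [eval_add, eval_mul, eval_X, eval_C, coeff_divX, zero_add]
    ring
  have hsmall : ‖R.divX.divX.eval y‖ < 1 := norm_eval_lt one_pos (fun i => by
    simpa only [coeff_divX] using hR (i + 1 + 1) (by omega)) hy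
  rw [hsplit, hψ.map_add_of_norm_lt_one, hψ.map_add]
  rw [norm_mul, norm_pow]
  exact mul_lt_one_of_nonneg_of_lt_one_left (norm_nonneg _) hsmall
    (pow_le_one₀ (norm_nonneg y) hy)

lemma IsAddChar.digitAverage_eq_zero_of_linear (hψ : IsAddChar ψ) (hT : IsDigitSystem π T)
    {R : K[X]} (hR1 : ‖R.coeff 1‖ = 1) (hR : ∀ i, 2 ≤ i → ‖R.coeff i‖ < 1) (n : ℕ) :
    digitAverage π T (n + 1) (fun x => ψ (R.eval x)) = 0 := by
  have hconst : ∀ t ∈ T, digitAverage π T n (fun x => ψ (R.eval (t + π * x))) =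
      ψ (R.coeff 0) * ψ (R.coeff 1 * t) := fun t ht => by
    refine (hT.digitAverage_congr (fun x hx => ?_) n).trans (hT.digitAverage_const _ n)
    rw [hψ.comp_eval_eq_of_norm_coeff_lt_one hR
      (hT.norm_add_mul_le_one (hT.norm_digit_le_one t ht) hx), mul_add,
      hψ.map_add_of_norm_lt_one]
    rw [norm_mul, norm_mul, hR1, one_mul]
    exact mul_lt_one_of_nonneg_of_lt_one_left (norm_nonneg π) hT.norm_lt_one hx
  rw [digitAverage, Finset.expect_congr rfl hconst, ← Finset.mul_expect,
    hψ.expect_mul_eq_zero hT hR1, mul_zero]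

/-- After a rescaling that makes the linear coefficient a unit, the higher coefficients become
small and the phase is linear. -/
lemma IsAddChar.digitAverage_eq_zero_of_derivative (hψ : IsAddChar ψ) (hT : IsDigitSystem π T)
    {p : ℕ} (hp : p.Prime) (hp1 : ‖(p : K)‖ < 1) {P : K[X]}
    (hP : HasWeierstrassDegree (derivative P).coeff 0)
    (hlarge : 1 ≤ ‖(p : K)‖ * ‖(derivative P).coeff 0‖) {n : ℕ}
    (hn : ‖(derivative P).coeff 0‖ * ‖π‖ ^ n < 1) :
    digitAverage π T n (fun x => ψ (P.eval x)) = 0 := by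
  have hb1 : 1 ≤ ‖(derivative P).coeff 0‖ :=
    hlarge.trans (mul_le_of_le_one_left (norm_nonneg _) hp1.le)
  obtain ⟨s, hs⟩ := hT.exists_norm_mul_pow_eq_one hb1
  have hsp : ‖π ^ s‖ ≤ ‖(p : K)‖ := by
    refine le_of_mul_le_mul_right ?_ (one_pos.trans_le hb1)
    rwa [mul_comm, norm_pow, hs]
  obtain ⟨r, rfl⟩ : ∃ r, n = s + (r + 1) := by
    refine Nat.exists_eq_add_of_lt (not_le.1 fun hns => hn.not_ge ?_)
    rw [← hs]
    gcongr ?_ * ?_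
    exact pow_le_pow_of_le_one (norm_nonneg π) hT.norm_lt_one.le hns
  rw [← norm_pow] at hs
  refine norm_le_zero_iff.1 (hT.norm_digitAverage_add_le s fun u hu => ?_)
  simp only [← eval_rescale]
  rw [hψ.digitAverage_eq_zero_of_linear hT (norm_coeff_one_rescale_eq_one hP hu hs)
    (fun i hi => norm_coeff_rescale_lt_one hP hu hs hp hp1 hsp hi), norm_zero]

end Character

/-- The polynomial phase `P` oscillates: its `k`-th derivative has constant norm on the integers and
is so large that this persists after `s` rescalings of the variable by `π`, while `P` varies
only on scales larger than `π ^ n`. -/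
structure IsOscillating {K : Type*} [NormedField K] (π : K) (p k s n : ℕ) (P : K[X]) : Prop where
  iterate_derivative : HasWeierstrassDegree (derivative^[k] P).coeff 0
  one_le : 1 ≤ ‖(p : K)‖ * (‖(derivative^[k] P).coeff 0‖ * ‖π‖ ^ (s * k))
  norm_coeff_lt : ∀ i, ‖(derivative P).coeff i‖ * ‖π‖ ^ n < 1

namespace IsOscillating

variable {K : Type*} [NontriviallyNormedField K] [IsUltrametricDist K] {π : K} {T : Finset K}
  {p k s n : ℕ} {P : K[X]}

lemma rescale_pow {r : ℕ} (h : IsOscillating π p k (r + s) (r + n) P) (hT : IsDigitSystem π T)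
    {u : K} (hu : ‖u‖ ≤ 1) : IsOscillating π p k s n (rescale P u (π ^ r)) where
  iterate_derivative := by
    rw [iterate_derivative_rescale]
    exact (h.iterate_derivative.rescale_of_zero hu (pow_ne_zero r hT.ne_zero)
      (hT.norm_pow_le_one r)).C_mul (pow_ne_zero k (pow_ne_zero r hT.ne_zero))
  one_le := by
    rw [iterate_derivative_rescale, coeff_C_mul, coeff_rescale, pow_zero, mul_one, norm_mul,
      norm_pow, norm_pow, norm_coeff_taylor_eq h.iterate_derivative.norm_lt hu]
    convert h.one_le using 2
    ring
  norm_coeff_lt i := by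
    have hπ := pow_pos hT.norm_pos (r + n)
    have hlt : ‖(taylor u (derivative P)).coeff i‖ < (‖π‖ ^ (r + n))⁻¹ :=
      norm_coeff_taylor_lt (inv_pos.2 hπ)
        (fun j _ => (lt_mul_inv_iff₀ hπ).2 (h.norm_coeff_lt j) |>.trans_eq (one_mul _))
        hu i.zero_le
    rw [derivative_rescale, coeff_C_mul, coeff_rescale, norm_mul, norm_mul, norm_pow _ i]
    calc ‖π ^ r‖ * (‖(taylor u (derivative P)).coeff i‖ * ‖π ^ r‖ ^ i) * ‖π‖ ^ n
        ≤ ‖π ^ r‖ * (‖(taylor u (derivative P)).coeff i‖ * 1) * ‖π‖ ^ n := by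
          gcongr
          exact pow_le_one₀ (norm_nonneg _) (hT.norm_pow_le_one r)
      _ = ‖(taylor u (derivative P)).coeff i‖ * ‖π‖ ^ (r + n) := by
          rw [norm_pow, pow_add]
          ring
      _ < 1 := (lt_mul_inv_iff₀ hπ).1 (hlt.trans_eq (one_mul _).symm)

lemma one_le_mul_norm_coeff_derivative (h : IsOscillating π p (k + 1) s n P)
    (hT : IsDigitSystem π T) : 1 ≤ ‖(p : K)‖ * ‖(derivative P).coeff k‖ := by
  refine h.one_le.trans (mul_le_mul_of_nonneg_left ?_ (norm_nonneg _))
  refine (mul_le_of_le_one_right (norm_nonneg _)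
    (pow_le_one₀ (norm_nonneg π) hT.norm_lt_one.le)).trans ?_
  rw [Function.iterate_succ_apply, coeff_iterate_derivative_eq_dcoeff]
  simpa using norm_iterate_dcoeff_le (a := (derivative P).coeff) k 0

lemma scale_ne_zero (h : IsOscillating π p (k + 1) s n P) (hT : IsDigitSystem π T)
    (hp1 : ‖(p : K)‖ < 1) : n ≠ 0 := by
  rintro rfl
  refine (h.one_le_mul_norm_coeff_derivative hT).not_gt ?_
  have hlt := h.norm_coeff_lt k
  rw [pow_zero, mul_one] at hlt
  exact mul_lt_one_of_nonneg_of_lt_one_left (norm_nonneg _) hp1 hlt.le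

variable {ψ : K → ℂ}

lemma digitAverage_eq_zero (h : IsOscillating π p (k + 1) s n P) (hT : IsDigitSystem π T)
    (hψ : IsAddChar ψ) (hp : p.Prime) (hp1 : ‖(p : K)‖ < 1)
    (hP : HasWeierstrassDegree (derivative P).coeff 0) :
    digitAverage π T n (fun x => ψ (P.eval x)) = 0 :=
  hψ.digitAverage_eq_zero_of_derivative hT hp hp1 hP
    ((h.one_le_mul_norm_coeff_derivative hT).trans
      (mul_le_mul_of_nonneg_left (hP.norm_le k) (norm_nonneg _)))
    (h.norm_coeff_lt 0)

/-- In each step of the induction, either the critical points of `P` spread over several residue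
classes and the degree drops in each class, or they all lie in one class and the phase is
nonstationary on the others. -/
lemma norm_digitAverage_le (h : IsOscillating π p (k + 1) s n P) (hT : IsDigitSystem π T)
    (hψ : IsAddChar ψ) (hp : p.Prime) (hp1 : ‖(p : K)‖ < 1) {d : ℕ}
    (hP : HasWeierstrassDegree (derivative P).coeff d) :
    ‖digitAverage π T n fun x => ψ (P.eval x)‖ ≤ (T.card : ℝ) ^ d / (T.card : ℝ) ^ s := by
  have hcard : (1 : ℝ) ≤ T.card := by exact_mod_cast hT.nonempty.card_pos
  have hcard0 := (one_pos.trans_le hcard).ne'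
  induction s generalizing n d P with
  | zero =>
    rw [pow_zero, div_one]
    exact (hT.norm_digitAverage_le (fun x _ => (hψ.norm_eq _).le) n).trans (one_le_pow₀ hcard)
  | succ s ih =>
    obtain ⟨n, rfl⟩ := Nat.exists_eq_succ_of_ne_zero (h.scale_ne_zero hT hp1)
    rw [add_comm s 1, Nat.succ_eq_add_one, add_comm n 1] at h
    have hchild : ∀ t ∈ T, IsOscillating π p (k + 1) s n (rescale P t π) := fun t ht => by
      simpa only [pow_one] using h.rescale_pow hT (hT.norm_digit_le_one t ht)
    simp only [digitAverage, ← eval_rescale]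
    by_cases hconc : ∃ t ∈ T, HasWeierstrassDegree (rescale (derivative P) t π).coeff d
    · obtain ⟨t, ht, htd⟩ := hconc
      rw [Finset.expect_eq_sum_div_card, Finset.sum_eq_single_of_mem t ht fun t' ht' hne =>
        (hchild t' ht').digitAverage_eq_zero hT hψ hp hp1 <|
          (hP.rescale_zero_of_rescale (hT.norm_digit_le_one t ht) (hT.norm_digit_le_one t' ht')
            (hT.norm_sub_eq_one ht' ht hne) hT.ne_zero hT.norm_lt_one htd).derivative_rescale
              hT.ne_zero,
        norm_div, RCLike.norm_natCast, pow_succ, ← div_div]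
      gcongr
      exact ih (hchild t ht) (htd.derivative_rescale hT.ne_zero)
    · refine hT.norm_expect_le fun t ht => ?_
      obtain ⟨d', hd', htd⟩ :=
        hP.exists_le_rescale (hT.norm_digit_le_one t ht) hT.ne_zero hT.norm_lt_one.le
      have hlt : d' < d := hd'.lt_of_ne fun hdd => hconc ⟨t, ht, hdd ▸ htd⟩
      calc _ ≤ (T.card : ℝ) ^ d' / (T.card : ℝ) ^ s :=
          ih (hchild t ht) (htd.derivative_rescale hT.ne_zero)
        _ = (T.card : ℝ) ^ (d' + 1) / (T.card : ℝ) ^ (s + 1) := by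
          rw [pow_succ, pow_succ, mul_div_mul_right _ _ hcard0]
        _ ≤ (T.card : ℝ) ^ d / (T.card : ℝ) ^ (s + 1) := by
          gcongr
          exact hlt

end IsOscillating

lemma HasWeierstrassDegree.exists_le_derivative_rescale {K : Type*} [NontriviallyNormedField K]
    [IsUltrametricDist K] {p k : ℕ} (hp : p.Prime) (hp1 : ‖(p : K)‖ < 1) {P : K[X]}
    (h : HasWeierstrassDegree (derivative^[k + 1] P).coeff 0) {u c : K} (hu : ‖u‖ ≤ 1)
    (hc0 : c ≠ 0) (hc : ‖c‖ ≤ ‖(p : K)‖ ^ (k + 1)) :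
    ∃ d ≤ k, HasWeierstrassDegree (derivative (rescale P u c)).coeff d := by
  have htaylor := h.taylor hu
  rw [Function.iterate_succ_apply, ← iterate_derivative_taylor,
    coeff_iterate_derivative_eq_dcoeff] at htaylor
  obtain ⟨d, hd, hdeg⟩ := htaylor.exists_le_mul_pow_of_iterate_dcoeff hp hp1 hc0 hc
  rw [← coeff_rescale_fun] at hdeg
  exact ⟨d, hd, hdeg.derivative_rescale hc0⟩

lemma exists_pow_pow_le_and_inv_le_rpow {b x : ℝ} (hb : 1 < b) (hx : 1 ≤ x) {m : ℕ} (hm : m ≠ 0) :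
    ∃ A : ℕ, (b ^ A) ^ m ≤ x ∧ (b ^ (A + 1))⁻¹ ≤ x ^ (-(1 : ℝ) / m) := by
  obtain ⟨A, hle, hlt⟩ := exists_nat_pow_near hx (one_lt_pow₀ hb hm)
  refine ⟨A, (pow_right_comm b A m).trans_le hle, ?_⟩
  have hroot : x ^ ((1 : ℝ) / m) ≤ b ^ (A + 1) := by
    rw [one_div, Real.rpow_inv_le_iff_of_pos (by positivity) (by positivity) (by positivity),
      Real.rpow_natCast, pow_right_comm]
    exact hlt.le
  rw [neg_div, Real.rpow_neg (by positivity)]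
  gcongr

section VanDerCorput

variable {K : Type*} [NontriviallyNormedField K] [IsUltrametricDist K] {π : K} {T : Finset K}
  {p e n : ℕ} {ψ : K → ℂ} {P : K[X]}

/-- A preliminary rescaling by `π ^ r` bounds the degree of the phase. -/
lemma IsOscillating.norm_digitAverage_add_le {k r s : ℕ}
    (h : IsOscillating π p (k + 1) (r + s) (r + n) P)
    (hT : IsDigitSystem π T) (hψ : IsAddChar ψ) (hp : p.Prime) (hp1 : ‖(p : K)‖ < 1)
    (hr : ‖π ^ r‖ ≤ ‖(p : K)‖ ^ (k + 1)) :
    ‖digitAverage π T (r + n) fun x => ψ (P.eval x)‖ ≤ (T.card : ℝ) ^ k / (T.card : ℝ) ^ s := by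
  have hcard : (1 : ℝ) ≤ T.card := by exact_mod_cast hT.nonempty.card_pos
  refine hT.norm_digitAverage_add_le r fun u hu => ?_
  obtain ⟨d, hd, hdeg⟩ := h.iterate_derivative.exists_le_derivative_rescale hp hp1 hu
    (pow_ne_zero r hT.ne_zero) hr
  simp only [← eval_rescale]
  refine ((h.rescale_pow hT hu).norm_digitAverage_le hT hψ hp hp1 hdeg).trans ?_
  gcongr

lemma IsAddChar.norm_digitAverage_eval_le_of_pow_le (hψ : IsAddChar ψ) (hT : IsDigitSystem π T)
    (hπ : ‖π‖ = (T.card : ℝ)⁻¹) (hp : p.Prime) (hp1 : ‖(p : K)‖ < 1) (hpe : ‖(p : K)‖ = ‖π‖ ^ e)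
    {k : ℕ} (hP : HasWeierstrassDegree (derivative^[k + 1] P).coeff 0)
    (hn : ∀ i, ‖(derivative P).coeff i‖ * ‖π‖ ^ n < 1) {A : ℕ}
    (hA : ((T.card : ℝ) ^ A) ^ (k + 1) ≤ ‖(derivative^[k + 1] P).coeff 0‖) :
    ‖digitAverage π T (e * (k + 1) + n) fun x => ψ (P.eval x)‖ ≤
      (T.card : ℝ) ^ (k + e * (k + 2)) / (T.card : ℝ) ^ A := by
  have hcard : (1 : ℝ) ≤ T.card := by exact_mod_cast hT.nonempty.card_pos
  rcases le_total A (e * (k + 2)) with hAe | hAe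
  · refine (hT.norm_digitAverage_le (fun x _ => (hψ.norm_eq _).le) _).trans ?_
    rw [one_le_div (by positivity)]
    exact pow_le_pow_right₀ hcard (by omega)
  obtain ⟨s, rfl⟩ := Nat.exists_eq_add_of_le hAe
  have hosc : IsOscillating π p (k + 1) (e * (k + 1) + s) (e * (k + 1) + n) P := by
    refine ⟨hP, ?_, fun i => lt_of_le_of_lt ?_ (hn i)⟩
    · have hexp : e + (e * (k + 1) + s) * (k + 1) ≤ (e * (k + 2) + s) * (k + 1) := by
        nlinarith [Nat.zero_le (e * k)]
      rw [hpe, hπ, mul_left_comm, ← pow_add, inv_pow, ← div_eq_mul_inv, one_le_div (by positivity)]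
      exact (pow_le_pow_right₀ hcard hexp).trans ((pow_mul _ _ _).trans_le hA)
    · gcongr ?_ * ?_
      exact pow_le_pow_of_le_one (norm_nonneg π) hT.norm_lt_one.le (Nat.le_add_left _ _)
  refine (hosc.norm_digitAverage_add_le hT hψ hp hp1 (by rw [norm_pow, hpe, pow_mul])).trans_eq ?_
  rw [pow_add _ k, pow_add _ _ s, mul_comm, mul_div_mul_left _ _ (by positivity)]

theorem IsAddChar.norm_digitAverage_eval_le (hψ : IsAddChar ψ) (hT : IsDigitSystem π T)
    (hπ : ‖π‖ = (T.card : ℝ)⁻¹) (hp : p.Prime) (hp1 : ‖(p : K)‖ < 1) (hpe : ‖(p : K)‖ = ‖π‖ ^ e)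
    {m : ℕ} (hm : m ≠ 0) (hP : HasWeierstrassDegree (derivative^[m] P).coeff 0)
    (hn : ∀ i, ‖(derivative P).coeff i‖ * ‖π‖ ^ n < 1) :
    ‖digitAverage π T (e * m + n) fun x => ψ (P.eval x)‖ ≤
      (T.card : ℝ) ^ (m + e * (m + 1)) * ‖(derivative^[m] P).coeff 0‖ ^ (-(1 : ℝ) / m) := by
  have hcard : (1 : ℝ) < T.card := by
    rw [← inv_inv (T.card : ℝ), ← hπ]
    exact (one_lt_inv₀ hT.norm_pos).2 hT.norm_lt_one
  rcases lt_or_ge ‖(derivative^[m] P).coeff 0‖ 1 with hD | hD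
  · refine (hT.norm_digitAverage_le (fun x _ => (hψ.norm_eq _).le) _).trans ?_
    refine one_le_mul_of_one_le_of_one_le (one_le_pow₀ hcard.le) ?_
    exact Real.one_le_rpow_of_pos_of_le_one_of_nonpos hP.norm_pos hD.le
      (div_nonpos_of_nonpos_of_nonneg (by norm_num) m.cast_nonneg)
  obtain ⟨A, hA, hinv⟩ := exists_pow_pow_le_and_inv_le_rpow hcard hD hm
  obtain ⟨k, rfl⟩ := Nat.exists_eq_succ_of_ne_zero hm
  calc _ ≤ (T.card : ℝ) ^ (k + e * (k + 2)) / (T.card : ℝ) ^ A :=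
        hψ.norm_digitAverage_eval_le_of_pow_le hT hπ hp hp1 hpe hP hn hA
    _ = (T.card : ℝ) ^ (k + 1 + e * (k + 1 + 1)) * ((T.card : ℝ) ^ (A + 1))⁻¹ := by
        field_simp
        ring
    _ ≤ _ := by gcongr

end VanDerCorput

/-! ### From polynomials to power series -/

section PowerSeries

variable {K : Type*} [NontriviallyNormedField K] {a : ℕ → K}

lemma coeff_iterate_derivative_trunc (a : ℕ → K) (n k i : ℕ) :
    (derivative^[k] (PowerSeries.trunc n (PowerSeries.mk a))).coeff i =
      if i + k < n then (dcoeff^[k] a) i else 0 := by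
  rw [coeff_iterate_derivative_eq_dcoeff, iterate_dcoeff_apply, iterate_dcoeff_apply,
    PowerSeries.coeff_trunc, PowerSeries.coeff_mk]
  split_ifs <;> simp

lemma IsConvergent.norm_pseval_sub_eval_trunc_le [IsUltrametricDist K] [CompleteSpace K]
    (ha : IsConvergent a) {n : ℕ} {C : ℝ} (hC : ∀ i, n ≤ i → ‖a i‖ ≤ C) {x : K} (hx : ‖x‖ ≤ 1) :
    ‖pseval a x - (PowerSeries.trunc n (PowerSeries.mk a)).eval x‖ ≤ C := by
  have hterm : ∀ i, ‖a i * x ^ i‖ ≤ ‖a i‖ := fun i => by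
    rw [norm_mul, norm_pow]
    exact mul_le_of_le_one_right (norm_nonneg _) (pow_le_one₀ (norm_nonneg x) hx)
  have hsum : Summable fun i => a i * x ^ i := by
    refine NonarchimedeanAddGroup.summable_of_tendsto_cofinite_zero ?_
    rw [Nat.cofinite_eq_atTop]
    exact squeeze_zero_norm hterm ha
  have heval : (PowerSeries.trunc n (PowerSeries.mk a)).eval x =
      ∑ i ∈ Finset.range n, a i * x ^ i := by
    simpa only [eval₂_id, PowerSeries.coeff_mk, RingHom.id_apply] using
      PowerSeries.eval₂_trunc_eq_sum_range x (RingHom.id K) n (PowerSeries.mk a)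
  rw [heval, pseval, ← hsum.sum_add_tsum_nat_add n, add_sub_cancel_left]
  exact IsUltrametricDist.norm_tsum_le_of_forall_le_of_nonneg
    ((norm_nonneg _).trans (hC n le_rfl)) fun i => (hterm _).trans (hC _ (Nat.le_add_left n i))

lemma exists_norm_coeff_mul_pow_lt_one (P : K[X]) {π : K} (hπ : ‖π‖ < 1) :
    ∃ n : ℕ, ∀ i, ‖P.coeff i‖ * ‖π‖ ^ n < 1 := by
  have hsupp : ∀ᶠ n : ℕ in atTop, ∀ i ∈ P.support, ‖P.coeff i‖ * ‖π‖ ^ n < 1 :=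
    (eventually_all_finset _).2 fun i _ =>
      ((tendsto_pow_atTop_nhds_zero_of_lt_one (norm_nonneg π) hπ).const_mul _).eventually_lt_const
        (by rw [mul_zero]; exact one_pos)
  obtain ⟨n, hn⟩ := hsupp.exists
  refine ⟨n, fun i => ?_⟩
  by_cases hi : i ∈ P.support
  · exact hn i hi
  · rw [notMem_support_iff.1 hi, norm_zero, zero_mul]
    exact one_pos

lemma HasWeierstrassDegree.iterate_derivative_trunc {k n : ℕ} (hkn : k < n)
    (h : HasWeierstrassDegree (dcoeff^[k] a) 0) :
    HasWeierstrassDegree (derivative^[k] (PowerSeries.trunc n (PowerSeries.mk a))).coeff 0 := by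
  refine of_forall_pos_lt fun i hi => ?_
  rw [coeff_iterate_derivative_trunc, coeff_iterate_derivative_trunc, zero_add, if_pos hkn]
  split_ifs
  · exact h.norm_lt i hi
  · rw [norm_zero]
    exact h.norm_pos

variable [IsUltrametricDist K] {π : K} {T : Finset K} {ψ : K → ℂ}

lemma IsAddChar.comp_eval_add (hψ : IsAddChar ψ) {P : K[X]} {x z : K}
    (hP : ∀ i, ‖P.coeff i‖ * ‖z‖ < 1) (hx : ‖x‖ ≤ 1) (hz : ‖z‖ ≤ 1) :
    ψ (P.eval (x + z)) = ψ (P.eval x) := by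
  have hexpand : P.eval (x + z) = P.eval x + (C z * (taylor x P).divX).eval z := by
    conv_lhs => rw [add_comm, ← taylor_eval, ← divX_mul_X_add (taylor x P)]
    simp only [eval_add, eval_mul, eval_X, eval_C, taylor_coeff_zero]
    ring
  have hcoeff : ∀ i, (C z * (taylor x P).divX).coeff i = (taylor x (C z * P)).coeff (i + 1) :=
    fun i => by rw [coeff_C_mul, coeff_divX, taylor_mul, taylor_C, coeff_C_mul]
  rw [hexpand, hψ.map_add_of_norm_lt_one]
  refine norm_eval_lt one_pos (fun i => ?_) hz
  rw [hcoeff]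
  refine norm_coeff_taylor_lt one_pos (fun j _ => ?_) hx (i + 1).zero_le
  rw [coeff_C_mul, norm_mul, mul_comm]
  exact hP j

theorem IsAddChar.norm_setIntegral_pseval_le [CompleteSpace K] [MeasurableSpace K] {μ : Measure K}
    [μ.IsAddLeftInvariant] (hμ : μ {x : K | ‖x‖ ≤ 1} = 1) (hψ : IsAddChar ψ)
    (hT : IsDigitSystem π T) (hπ : ‖π‖ = (T.card : ℝ)⁻¹) {p e : ℕ} (hp : p.Prime)
    (hp1 : ‖(p : K)‖ < 1) (hpe : ‖(p : K)‖ = ‖π‖ ^ e) (ha : IsConvergent a) {m : ℕ} (hm : m ≠ 0)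
    (h : HasWeierstrassDegree (dcoeff^[m] a) 0) :
    ‖∫ x in {x : K | ‖x‖ ≤ 1}, ψ (pseval a x) ∂μ‖ ≤
      (T.card : ℝ) ^ (m + e * (m + 1)) * ‖(dcoeff^[m] a) 0‖ ^ (-(1 : ℝ) / m) := by
  obtain ⟨M, htail⟩ := eventually_atTop.1 (ha.eventually_le_const (half_pos one_pos))
  set P := PowerSeries.trunc (max M (m + 1)) (PowerSeries.mk a) with hP
  have hcongr : ∀ x : K, ‖x‖ ≤ 1 → ψ (pseval a x) = ψ (P.eval x) := fun x hx => by
    rw [← add_sub_cancel (P.eval x) (pseval a x), hψ.map_add_of_norm_lt_one]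
    exact (ha.norm_pseval_sub_eval_trunc_le (fun i hi => htail i (le_of_max_le_left hi))
      hx).trans_lt one_half_lt_one
  have hm' : m < max M (m + 1) := lt_max_of_lt_right m.lt_succ_self
  have hPm : HasWeierstrassDegree (derivative^[m] P).coeff 0 := h.iterate_derivative_trunc hm'
  have hPm0 : (derivative^[m] P).coeff 0 = (dcoeff^[m] a) 0 := by
    rw [hP, coeff_iterate_derivative_trunc, zero_add, if_pos hm']
  obtain ⟨n, hn⟩ := exists_norm_coeff_mul_pow_lt_one P hT.norm_lt_one
  have hn' : ∀ i, ‖(derivative P).coeff i‖ * ‖π‖ ^ n < 1 := fun i => by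
    refine lt_of_le_of_lt ?_ (hn (i + 1))
    gcongr
    rw [coeff_derivative_eq_dcoeff]
    exact norm_iterate_dcoeff_le 1 i
  have hconst : ∀ x w, ‖x‖ ≤ 1 → ‖w‖ ≤ 1 →
      ψ (P.eval (x + π ^ (e * m + n) * w)) = ψ (P.eval x) := fun x w hx hw => by
    have hle : ‖π ^ (e * m + n) * w‖ ≤ ‖π‖ ^ n := by
      rw [pow_add, mul_right_comm, norm_mul, norm_pow _ n, norm_mul]
      exact mul_le_of_le_one_left (by positivity)
        (mul_le_one₀ (hT.norm_pow_le_one _) (norm_nonneg w) hw)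
    exact hψ.comp_eval_add (fun i => lt_of_le_of_lt (by gcongr) (hn i)) hx
      (hle.trans (pow_le_one₀ (norm_nonneg π) hT.norm_lt_one.le))
  rw [← hPm0]
  exact (hT.norm_setIntegral_le_norm_digitAverage hμ hcongr hconst).trans
    (hψ.norm_digitAverage_eval_le hT hπ hp hp1 hpe hm hPm hn')

end PowerSeries

lemma pow_mul_rpow_neg_one_div {x z : ℝ} (hx : 0 ≤ x) (hz : 0 ≤ z) {m : ℕ} (hm : m ≠ 0) :
    (x ^ m * z) ^ (-(1 : ℝ) / m) = x⁻¹ * z ^ (-(1 : ℝ) / m) := by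
  rw [Real.mul_rpow (pow_nonneg hx m) hz, neg_div, one_div, Real.rpow_neg (pow_nonneg hx m),
    Real.pow_rpow_inv_natCast hx hm]

lemma norm_prime_pow_mul_le_norm_iterate_dcoeff {K : Type*} [NontriviallyNormedField K]
    [IsUltrametricDist K] {p : ℕ} (hp : p.Prime) (hp1 : ‖(p : K)‖ < 1) (a : ℕ → K) {d m : ℕ}
    (hd : d ≤ m) : ‖(p : K)‖ ^ m * ‖a d‖ ≤ ‖(dcoeff^[d] a) 0‖ := by
  rw [iterate_dcoeff_apply_zero, norm_mul]
  gcongr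
  exact (pow_le_pow_of_le_one (norm_nonneg _) hp1.le hd).trans
    (norm_prime_pow_le_norm_factorial hp hp1 d)

theorem IsAddChar.norm_setIntegral_pseval_le_of_hasWeierstrassDegree {K : Type*}
    [NontriviallyNormedField K] [IsUltrametricDist K] [CompleteSpace K] [MeasurableSpace K]
    {μ : Measure K} [μ.IsAddLeftInvariant] (hμ : μ {x : K | ‖x‖ ≤ 1} = 1) {ψ : K → ℂ}
    (hψ : IsAddChar ψ) {π : K} {T : Finset K} (hT : IsDigitSystem π T)
    (hπ : ‖π‖ = (T.card : ℝ)⁻¹) {p e : ℕ} (hp : p.Prime) (hp1 : ‖(p : K)‖ < 1)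
    (hpe : ‖(p : K)‖ = ‖π‖ ^ e) {a : ℕ → K} (ha : IsConvergent a) {m j : ℕ} (hm : m ≠ 0)
    (hj : j ≤ m) (h : HasWeierstrassDegree (dcoeff^[j] a) (m - j)) :
    ‖∫ x in {x : K | ‖x‖ ≤ 1}, ψ (pseval a x) ∂μ‖ ≤
      (T.card : ℝ) ^ (m + e * (m + 2)) * ‖(dcoeff^[j] a) (m - j)‖ ^ (-(1 : ℝ) / m) := by
  have hp0 : 0 < ‖(p : K)‖ := hpe ▸ pow_pos hT.norm_pos e
  have hlower := norm_prime_pow_mul_le_norm_iterate_dcoeff hp hp1 (dcoeff^[j] a) (Nat.sub_le m j)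
  have hfact : ((m - j).factorial : K) ≠ 0 :=
    norm_pos_iff.1 ((pow_pos hp0 _).trans_le (norm_prime_pow_le_norm_factorial hp hp1 (m - j)))
  have hdeg := h.iterate_dcoeff_zero hfact
  rw [← Function.iterate_add_apply, Nat.sub_add_cancel hj] at hlower hdeg
  calc _ ≤ (T.card : ℝ) ^ (m + e * (m + 1)) * ‖(dcoeff^[m] a) 0‖ ^ (-(1 : ℝ) / m) :=
        hψ.norm_setIntegral_pseval_le hμ hT hπ hp hp1 hpe ha hm hdeg
    _ ≤ (T.card : ℝ) ^ (m + e * (m + 1)) *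
        (‖(p : K)‖ ^ m * ‖(dcoeff^[j] a) (m - j)‖) ^ (-(1 : ℝ) / m) := by
        gcongr _ * ?_
        exact Real.rpow_le_rpow_of_nonpos (mul_pos (pow_pos hp0 m) h.norm_pos) hlower
          (div_nonpos_of_nonpos_of_nonneg (by norm_num) m.cast_nonneg)
    _ = _ := by
        rw [pow_mul_rpow_neg_one_div hp0.le (norm_nonneg _) hm, hpe, hπ, inv_pow, inv_inv,
          ← mul_assoc, ← pow_add]
        ring_nf

section LocalField

variable {K : Type*} [NontriviallyNormedField K] {q : ℕ}

lemma IsLocalField.exists_isDigitSystem (hK : IsLocalField K q) :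
    ∃ (π : K) (T : Finset K), IsDigitSystem π T ∧ T.card = q ∧ ‖π‖ = (T.card : ℝ)⁻¹ := by
  obtain ⟨π, hπ⟩ := hK.exists_unif
  obtain ⟨T, rfl, hT, hdigit⟩ := hK.residue
  have hone_lt : (1 : ℝ) < T.card := by exact_mod_cast hK.one_lt
  refine ⟨π, T, ⟨?_, ?_, fun x hx => ?_, hT, hdigit⟩, rfl, hπ⟩
  · rw [← norm_pos_iff, hπ]
    positivity
  · rw [hπ]
    exact inv_lt_one_of_one_lt₀ hone_lt
  · obtain ⟨k, hk⟩ := hK.discrete x hx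
    exact ⟨-k, by rw [hk, hπ, inv_zpow', neg_neg]⟩

lemma IsRegularOfDeg.norm_coeff_eq_one [IsUltrametricDist K] {a : ℕ → K} {d : ℕ}
    (h : IsRegularOfDeg a d) : ‖a d‖ = 1 := by
  rw [IsUltrametricDist.norm_eq_of_add_norm_lt_max (x := a d) (y := -1), norm_neg, norm_one]
  rw [← sub_eq_add_neg, norm_neg, norm_one]
  exact h.2.1.trans_le (le_max_right _ _)

lemma IsRegularOfDeg.hasWeierstrassDegree [IsUltrametricDist K] {a : ℕ → K} {d : ℕ}
    (h : IsRegularOfDeg a d) : HasWeierstrassDegree a d where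
  norm_le i := (h.1 i).trans_eq h.norm_coeff_eq_one.symm
  norm_lt i hi := (h.2.2 i hi).trans_eq h.norm_coeff_eq_one.symm

lemma pseval_const_mul (y : K) (a : ℕ → K) (x : K) :
    pseval (fun i => y * a i) x = y * pseval a x := by
  simp only [pseval, mul_assoc, tsum_mul_left]

lemma iterate_dcoeff_const_mul (y : K) (a : ℕ → K) (k : ℕ) :
    dcoeff^[k] (fun i => y * a i) = fun i => y * (dcoeff^[k] a) i := by
  ext i
  rw [iterate_dcoeff_apply, iterate_dcoeff_apply]
  ring

lemma IsConvergent.const_mul {a : ℕ → K} (ha : IsConvergent a) (y : K) :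
    IsConvergent fun i => y * a i := by
  simpa only [IsConvergent, norm_mul, mul_zero] using Tendsto.const_mul ‖y‖ ha

end LocalField

end VdC

open VdC in
theorem statement8_general {K : Type*} [NontriviallyNormedField K] [MeasurableSpace K]
    {μ : Measure K} [μ.IsAddLeftInvariant] (hμ : μ {x : K | ‖x‖ ≤ 1} = 1) {q p e : ℕ}
    (hK : IsLocalField K q) (hpe : IsResidueData K q p e) {ψ : K → ℂ} (hψ : IsAddChar ψ)
    {a : ℕ → K} {j m : ℕ} (ha : IsConvergent a) (hm : 0 < m) (hj : j ≤ m)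
    (h : HasWeierstrassDegree (dcoeff^[j] a) (m - j)) {y : K} (hy : y ≠ 0) :
    ‖∫ x in {x : K | ‖x‖ ≤ 1}, ψ (y * pseval a x) ∂μ‖ ≤
      (q : ℝ) ^ (m + e * (m + 2)) * (‖y‖ * ‖(dcoeff^[j] a) (m - j)‖) ^ (-(1 : ℝ) / m) := by
  have := IsUltrametricDist.isUltrametricDist_of_isNonarchimedean_norm hK.nonarch
  have := hK.complete
  obtain ⟨π, T, hT, rfl, hπ⟩ := hK.exists_isDigitSystem
  obtain ⟨hp, -, he, hpnorm⟩ := hpe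
  rw [← hπ] at hpnorm
  have hp1 : ‖(p : K)‖ < 1 := hpnorm ▸ pow_lt_one₀ hT.norm_pos.le hT.norm_lt_one he.ne'
  have hscale := iterate_dcoeff_const_mul y a j
  simpa only [pseval_const_mul, hscale, norm_mul] using
    hψ.norm_setIntegral_pseval_le_of_hasWeierstrassDegree hμ hT hπ hp hp1 hpnorm
      (ha.const_mul y) hm.ne' hj (hscale ▸ h.const_mul hy)

open VdC in
/-- Corollary 3.3, generalizing Rogers.  Suppose `f^{(j)} ∈ O_K⦃x⦄`
is regular of degree `m - j > 0` for some `j ≥ 0`.  If `K` has characteristic zero,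
then there is a constant `c_{m,K}` depending only on `m`, `q_K` and the ramification
degree `e = ord(p_K)` with `|∫_{O_K} ψ(y f(t)) dt| ≤ c_{m,K} |y|^{-1/m}` for all
nonzero `y ∈ K`. -/
theorem statement8 (m q : ℕ) (hq : 1 < q) :
    ∃ c : ℕ → ℝ,
      ∀ (K : Type) [NontriviallyNormedField K] [CharZero K] [MeasurableSpace K]
        (μ : Measure K), μ.IsAddHaarMeasure → μ {x : K | ‖x‖ ≤ 1} = 1 →
        IsLocalField K q → ∀ p e : ℕ, IsResidueData K q p e →
        ∀ ψ : K → ℂ, IsAddChar ψ →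
        ∀ (a : ℕ → K) (j : ℕ), IsConvergent a → j < m →
          IsRegularOfDeg (dcoeff^[j] a) (m - j) →
          ∀ y : K, y ≠ 0 →
            ‖∫ x in {x : K | ‖x‖ ≤ 1}, ψ (y * pseval a x) ∂μ‖
              ≤ c e * ‖y‖ ^ (-(1 : ℝ) / m) := by
  refine ⟨fun e => (q : ℝ) ^ (m + e * (m + 2)), ?_⟩
  intro K _ _ _ μ hμ hμ1 hK p e hpe ψ hψ a j ha hj hreg y hy
  have := IsUltrametricDist.isUltrametricDist_of_isNonarchimedean_norm hK.nonarch
  simpa only [hreg.norm_coeff_eq_one, mul_one] using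
    statement8_general hμ1 hK hpe hψ ha (j.zero_le.trans_lt hj) hj.le hreg.hasWeierstrassDegree hy
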